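/- Let E(G) = E₁ ∪ E₂ be a (3,5)-free blue-red coloring of the edges of a graph G, and let v ∈ V(G). Then the subgraph G₂(v) induced by the red neighborhood of v does not contain K₁ + C₅ + C₅ + C₅ (the join of a single vertex with three disjoint 5-cycles) as a subgraph. -/

import Mathlib

open SimpleGraph

/-- A blue-red coloring of the edges of `G`: a partition `E(G) = E₁ ∪ E₂`,
`E₁ ∩ E₂ = ∅` (edges in `E₁` are blue, edges in `E₂` are red). -/
def IsBRColoring {V : Type*} (G : SimpleGraph V) (E1 E2 : Set (Sym2 V)) : Prop :=
  E1 ∪ E2 = G.edgeSet ∧ E1 ∩ E2 = ∅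

/-- `G` has an `n`-clique all of whose edges lie in the edge set `E`
(a monochromatic `n`-clique in the color `E`). -/
def HasMonoNClique {V : Type*} (G : SimpleGraph V) (E : Set (Sym2 V)) (n : ℕ) : Prop :=
  ∃ S : Finset V, G.IsNClique n S ∧ ∀ x ∈ S, ∀ y ∈ S, x ≠ y → s(x, y) ∈ E

/-- The blue-red coloring `E1, E2` is `(p,q)`-free: there is no blue `p`-clique
and no red `q`-clique. -/
def IsPQFree {V : Type*} (G : SimpleGraph V) (E1 E2 : Set (Sym2 V)) (p q : ℕ) : Prop :=
  ¬ HasMonoNClique G E1 p ∧ ¬ HasMonoNClique G E2 q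

/-- `G → (p,q)` : no blue-red coloring of `E(G)` is `(p,q)`-free. -/
def Arrows {V : Type*} (G : SimpleGraph V) (p q : ℕ) : Prop :=
  ∀ E1 E2 : Set (Sym2 V), IsBRColoring G E1 E2 → ¬ IsPQFree G E1 E2 p q

/-- The neighborhood of `v` in the color `E`: all neighbors `u` of `v`
with `[v,u] ∈ E`.  With `E = E1` this is `N₁(v)`, with `E = E2` it is `N₂(v)`. -/
def colorNbhd {V : Type*} (G : SimpleGraph V) (E : Set (Sym2 V)) (v : V) : Set V :=
  {u | G.Adj v u ∧ s(v, u) ∈ E}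

/-- The join `G + H` of two graphs on disjoint vertex sets: all edges of `G`,
all edges of `H`, and all pairs `[x,y]` with `x ∈ V(G)`, `y ∈ V(H)`. -/
def graphJoin {α β : Type*} (G : SimpleGraph α) (H : SimpleGraph β) :
    SimpleGraph (α ⊕ β) where
  Adj x y :=
    match x, y with
    | .inl a, .inl b => G.Adj a b
    | .inr a, .inr b => H.Adj a b
    | .inl _, .inr _ => True
    | .inr _, .inl _ => True
  symm := by refine ⟨?_⟩; rintro (a | a) (b | b) <;> simp [SimpleGraph.adj_comm]
  loopless := by refine ⟨?_⟩; rintro (a | a) <;> simp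

/-- `G` contains a copy of `H` as a subgraph: there is an injective map of the
vertices of `H` into the vertices of `G` sending edges to edges. -/
def ContainsCopy {V W : Type*} (G : SimpleGraph V) (H : SimpleGraph W) : Prop :=
  ∃ f : W ↪ V, ∀ a b : W, H.Adj a b → G.Adj (f a) (f b)

/-- `s` is an independent set of `G`: no two of its vertices are adjacent. -/
def IsIndepSet {V : Type*} (G : SimpleGraph V) (s : Set V) : Prop :=
  ∀ x ∈ s, ∀ y ∈ s, ¬ G.Adj x y

/-!
The red neighborhood of `v` inherits a coloring without blue triangles and red 4-cliques, so it
suffices to show `K₁ + C₅ + C₅ + C₅ → (3,4)`. Suppose a coloring of this graph avoids both, and let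
`w` be the apex. The red neighborhood of `w` has no monochromatic triangle, and its blue
neighborhood spans only red edges.

* Some cycle `φ` has an edge with both ends in the blue neighborhood of `w`. Otherwise each of the
  three cycles has an edge in the red neighborhood, and these edges form a 6-clique there, against
  `R(3,3) = 6`.
* Another cycle `χ` then lies in the red neighborhood of `w`, as otherwise the blue neighborhood
  contains a 4-clique. Since `K₃ + C₅ → (3,3)`, all of `φ` lies in the blue neighborhood, so `φ` is
  red.
* Let the trace of a vertex be its set of blue neighbors on `φ`. Blue edges have disjoint traces at
  their ends, while the traces at the ends of a red edge in the red neighborhood of `w` together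
  cover the edges of `φ`. As `C₅` is not bipartite, two vertex covers of it always intersect.
* The trace conditions force the third cycle `ψ` into the red neighborhood of `w` as well. There
  `ψ` and `χ`, being joined, are both blue or both red, and the trace conditions exclude both.
-/

section NonBipartite

variable {ι : Type*} {H : SimpleGraph ι} {s t : Set ι}

theorem exists_adj_iff_of_not_isBipartite (hH : ¬H.IsBipartite) (p : ι → Prop) :
    ∃ x y, H.Adj x y ∧ (p x ↔ p y) := by
  classical
  by_contra! hp
  refine hH ⟨Coloring.mk (fun x ↦ if p x then (0 : Fin 2) else 1) fun {x y} hxy ↦ ?_⟩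
  have := hp x y hxy
  grind

theorem exists_adj_mem_of_isVertexCover (hH : ¬H.IsBipartite) (hs : H.IsVertexCover s) :
    ∃ x y, H.Adj x y ∧ x ∈ s ∧ y ∈ s := by
  obtain ⟨x, y, hxy, hiff⟩ := exists_adj_iff_of_not_isBipartite hH (· ∈ s)
  have := hs hxy
  exact ⟨x, y, hxy, by tauto, by tauto⟩

theorem exists_adj_notMem_of_isIndepSet (hH : ¬H.IsBipartite) (hs : H.IsIndepSet s) :
    ∃ x y, H.Adj x y ∧ x ∉ s ∧ y ∉ s :=
  exists_adj_mem_of_isVertexCover hH (isVertexCover_compl.2 hs)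

theorem not_isVertexCover_of_isIndepSet (hH : ¬H.IsBipartite) (hs : H.IsIndepSet s) :
    ¬H.IsVertexCover s := fun hc ↦ by
  obtain ⟨x, y, hxy, hx, hy⟩ := exists_adj_mem_of_isVertexCover hH hc
  exact hs hx hy hxy.ne hxy

theorem inter_nonempty_of_isVertexCover (hH : ¬H.IsBipartite) (hs : H.IsVertexCover s)
    (ht : H.IsVertexCover t) : (s ∩ t).Nonempty := by
  by_contra hst
  refine not_isVertexCover_of_isIndepSet hH (isVertexCover_compl.1 (hs.subset ?_)) ht
  exact (Set.disjoint_iff_inter_eq_empty.2 (Set.not_nonempty_iff_eq_empty.1 hst)).subset_compl_right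

theorem isIndepSet_iff_forall_not_adj : H.IsIndepSet s ↔ ∀ ⦃x⦄, x ∈ s → ∀ ⦃y⦄, y ∈ s → ¬H.Adj x y :=
  ⟨fun hs _ hx _ hy h ↦ hs hx hy h.ne h, fun hs _ hx _ hy _ ↦ hs hx hy⟩

theorem not_isBipartite_cycleGraph_five : ¬(cycleGraph 5).IsBipartite := by
  intro h
  have := h.chromaticNumber_le
  rw [chromaticNumber_cycleGraph_of_odd 5 (by norm_num) (by decide)] at this
  exact absurd this (by decide)

end NonBipartite

section TriangleFree

variable {V ι κ : Type*} {H : SimpleGraph ι} {K : SimpleGraph κ} {B R : SimpleGraph V}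

theorem not_adj_of_cliqueFree_three (hB : B.CliqueFree 3) {a b c : V} (hab : B.Adj a b)
    (hac : B.Adj a c) : ¬B.Adj b c := by
  classical
  exact fun hbc ↦ hB {a, b, c} (is3Clique_triple_iff.2 ⟨hab, hac, hbc⟩)

theorem isIndepSet_setOf_adj (hB : B.CliqueFree 3) (ψ : K →g B) (y : V) :
    K.IsIndepSet {k | B.Adj y (ψ k)} :=
  isIndepSet_iff_forall_not_adj.2 fun _ hk _ hl hkl ↦
    not_adj_of_cliqueFree_three hB hk hl (ψ.map_adj hkl)

theorem red_of_blue_of_blue (hB : B.CliqueFree 3) {a b c : V} (hab : B.Adj a b)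
    (hac : B.Adj a c) (hbc : (B ⊔ R).Adj b c) : R.Adj b c :=
  hbc.resolve_left (not_adj_of_cliqueFree_three hB hab hac)

theorem blue_of_red_of_red (hR : R.CliqueFree 3) {a b c : V} (hab : R.Adj a b)
    (hac : R.Adj a c) (hbc : (B ⊔ R).Adj b c) : B.Adj b c :=
  hbc.resolve_right (not_adj_of_cliqueFree_three hR hab hac)

theorem not_adj_of_red_star (hB : B.CliqueFree 3) (hR : R.CliqueFree 3) {v a b c : V}
    (ha : R.Adj v a) (hb : R.Adj v b) (hc : R.Adj v c) (hab : (B ⊔ R).Adj a b)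
    (hac : (B ⊔ R).Adj a c) : ¬(B ⊔ R).Adj b c := fun hbc ↦
  not_adj_of_cliqueFree_three hB (blue_of_red_of_red hR ha hb hab)
    (blue_of_red_of_red hR ha hc hac) (blue_of_red_of_red hR hb hc hbc)

theorem not_adj_of_blue_star (hB : B.CliqueFree 3) (hR : R.CliqueFree 3) {v a b c : V}
    (ha : B.Adj v a) (hb : B.Adj v b) (hc : B.Adj v c) (hab : (B ⊔ R).Adj a b)
    (hac : (B ⊔ R).Adj a c) : ¬(B ⊔ R).Adj b c := by
  rw [sup_comm] at *
  exact not_adj_of_red_star hR hB ha hb hc hab hac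

theorem sup_cliqueFree_six (hB : B.CliqueFree 3) (hR : R.CliqueFree 3) :
    (B ⊔ R).CliqueFree 6 := by
  classical
  intro t ht
  obtain ⟨v, hv⟩ : t.Nonempty := Finset.card_pos.1 (by rw [ht.card_eq]; norm_num)
  have hadj {a b} (ha : a ∈ t.erase v) (hb : b ∈ t.erase v) (hab : a ≠ b) : (B ⊔ R).Adj a b :=
    ht.isClique (Finset.mem_of_mem_erase ha) (Finset.mem_of_mem_erase hb) hab
  have hv_adj {a} (ha : a ∈ t.erase v) : (B ⊔ R).Adj v a :=
    ht.isClique hv (Finset.mem_of_mem_erase ha) (Finset.ne_of_mem_erase ha).symm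
  have hsum := Finset.card_filter_add_card_filter_not (s := t.erase v) (B.Adj v)
  rw [Finset.card_erase_of_mem hv, ht.card_eq] at hsum
  obtain hblue | hred :
      2 < ((t.erase v).filter (B.Adj v)).card ∨ 2 < ((t.erase v).filter (¬B.Adj v ·)).card := by
    lia
  · obtain ⟨a, b, c, ha, hb, hc, hab, hac, hbc⟩ := Finset.two_lt_card_iff.1 hblue
    rw [Finset.mem_filter] at ha hb hc
    exact not_adj_of_blue_star hB hR ha.2 hb.2 hc.2 (hadj ha.1 hb.1 hab) (hadj ha.1 hc.1 hac)
      (hadj hb.1 hc.1 hbc)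
  · obtain ⟨a, b, c, ha, hb, hc, hab, hac, hbc⟩ := Finset.two_lt_card_iff.1 hred
    rw [Finset.mem_filter] at ha hb hc
    have hred' {a} (ha : a ∈ t.erase v ∧ ¬B.Adj v a) : R.Adj v a :=
      (hv_adj ha.1).resolve_left ha.2
    exact not_adj_of_red_star hB hR (hred' ha) (hred' hb) (hred' hc) (hadj ha.1 hb.1 hab)
      (hadj ha.1 hc.1 hac) (hadj hb.1 hc.1 hbc)

theorem not_red_of_blue_of_join (hB : B.CliqueFree 3) (hR : R.CliqueFree 3) (hK : ¬K.IsBipartite)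
    (ψ : K →g B ⊔ R) {y₁ y₂ y₃ : V} (h₁ : ∀ k, (B ⊔ R).Adj y₁ (ψ k))
    (h₂ : ∀ k, (B ⊔ R).Adj y₂ (ψ k)) (h₃ : ∀ k, (B ⊔ R).Adj y₃ (ψ k))
    (h₂₁ : B.Adj y₂ y₁) : ¬R.Adj y₂ y₃ := by
  intro h₂₃
  obtain ⟨k, l, hkl, hiff⟩ := exists_adj_iff_of_not_isBipartite hK fun k ↦ B.Adj y₂ (ψ k)
  have hψ := ψ.map_adj hkl
  by_cases hk : B.Adj y₂ (ψ k)
  · exact not_adj_of_blue_star hB hR h₂₁ hk (hiff.1 hk) (h₁ k) (h₁ l) hψ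
  · exact not_adj_of_red_star hB hR h₂₃ ((h₂ k).resolve_left hk)
      ((h₂ l).resolve_left (hk ∘ hiff.2)) (h₃ k) (h₃ l) hψ

theorem not_triangle_join (hB : B.CliqueFree 3) (hR : R.CliqueFree 3) (hK : ¬K.IsBipartite)
    (ψ : K →g B ⊔ R) {x y z : V} (hx : ∀ k, (B ⊔ R).Adj x (ψ k)) (hy : ∀ k, (B ⊔ R).Adj y (ψ k))
    (hz : ∀ k, (B ⊔ R).Adj z (ψ k)) (hxy : (B ⊔ R).Adj x y) (hxz : (B ⊔ R).Adj x z) :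
    ¬(B ⊔ R).Adj y z := by
  intro hyz
  rcases hxy with hxy | hxy
  · exact not_adj_of_cliqueFree_three hB hxy
      (hxz.resolve_right (not_red_of_blue_of_join hB hR hK ψ hy hx hz hxy))
      (hyz.resolve_right (not_red_of_blue_of_join hB hR hK ψ hx hy hz hxy.symm))
  · exact not_adj_of_cliqueFree_three hR hxy
      (hxz.resolve_left fun h ↦ not_red_of_blue_of_join hB hR hK ψ hz hx hy h hxy)
      (hyz.resolve_left fun h ↦ not_red_of_blue_of_join hB hR hK ψ hz hy hx h hxy.symm)

theorem forall_blue_or_forall_red_of_join (hB : B.CliqueFree 3) (hR : R.CliqueFree 3)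
    (hH : H.Preconnected) (hK : ¬K.IsBipartite) (φ : H →g B ⊔ R) (ψ : K →g B ⊔ R)
    (hφψ : ∀ x k, (B ⊔ R).Adj (φ x) (ψ k)) :
    H ≤ B.comap φ ∨ H ≤ R.comap φ := by
  have hlocal {x y z} (hxz : H.Adj x z) (hb : B.Adj (φ x) (φ y)) : B.Adj (φ x) (φ z) :=
    (φ.map_adj hxz).resolve_right
      (not_red_of_blue_of_join hB hR hK ψ (hφψ y) (hφψ x) (hφψ z) hb)
  by_cases hblue : ∃ x y, B.Adj (φ x) (φ y)
  · obtain ⟨x, y, hb⟩ := hblue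
    left
    intro u v huv
    obtain ⟨p⟩ := hH x u
    induction p generalizing y with
    | nil => exact hlocal huv hb
    | cons h _ ih => exact ih _ (hlocal h hb).symm huv
  · exact .inr fun x y hxy ↦ (φ.map_adj hxy).resolve_left fun hb ↦ hblue ⟨x, y, hb⟩

theorem not_red_of_forall_blue_of_join (hB : B.CliqueFree 3) (hR : R.CliqueFree 3)
    (hK : ¬K.IsBipartite) (ψ : K →g B) {y y' : V} (hy : ∀ k, (B ⊔ R).Adj y (ψ k))
    (hy' : ∀ k, (B ⊔ R).Adj y' (ψ k)) : ¬R.Adj y y' := by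
  intro hyy'
  obtain ⟨k, l, hkl, hiff⟩ := exists_adj_iff_of_not_isBipartite hK fun k ↦ B.Adj y (ψ k)
  have hψ := ψ.map_adj hkl
  by_cases hk : B.Adj y (ψ k)
  · exact not_adj_of_cliqueFree_three hB hk (hiff.1 hk) hψ
  · exact not_adj_of_red_star hB hR hyy' ((hy k).resolve_left hk)
      ((hy l).resolve_left (hk ∘ hiff.2)) (hy' k) (hy' l) (.inl hψ)

theorem both_blue_or_both_red_of_join (hB : B.CliqueFree 3) (hR : R.CliqueFree 3)
    (hH : H.Preconnected) (hH₂ : ¬H.IsBipartite) (hK : K.Preconnected) (hK₂ : ¬K.IsBipartite)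
    (φ : H →g B ⊔ R) (ψ : K →g B ⊔ R) (hφψ : ∀ x k, (B ⊔ R).Adj (φ x) (ψ k)) :
    (H ≤ B.comap φ ∧ K ≤ B.comap ψ) ∨ (H ≤ R.comap φ ∧ K ≤ R.comap ψ) := by
  obtain ⟨x, y, hxy, -⟩ := exists_adj_iff_of_not_isBipartite hH₂ fun _ ↦ True
  rcases forall_blue_or_forall_red_of_join hB hR hH hK₂ φ ψ hφψ with hφ | hφ <;>
    rcases forall_blue_or_forall_red_of_join hB hR hK hH₂ ψ φ fun k x ↦ (hφψ x k).symm with hψ | hψ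
  · exact .inl ⟨hφ, hψ⟩
  · refine absurd (hφ hxy) (not_red_of_forall_blue_of_join hR hB hK₂ ⟨ψ, @hψ⟩ ?_ ?_) <;>
      exact fun k ↦ sup_comm B R ▸ hφψ _ k
  · exact absurd (hφ hxy)
      (not_red_of_forall_blue_of_join hB hR hK₂ ⟨ψ, @hψ⟩ (hφψ x) (hφψ y))
  · exact .inr ⟨hφ, hψ⟩

end TriangleFree

/-- An abstraction of a red copy of `H` lying in the red neighborhood of a vertex: `B` and `R` are
the colors on the rest of that neighborhood, and the trace `L u` of `u` is the set of vertices of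
the copy joined to `u` by blue edges. -/
structure IsTraceSystem {V ι : Type*} (H : SimpleGraph ι) (B R : SimpleGraph V) (L : V → Set ι) :
    Prop where
  blue_cliqueFree : B.CliqueFree 3
  red_cliqueFree : R.CliqueFree 3
  disjoint_of_blue : ∀ ⦃u v⦄, B.Adj u v → Disjoint (L u) (L v)
  isVertexCover_of_red : ∀ ⦃u v⦄, R.Adj u v → H.IsVertexCover (L u ∪ L v)

namespace IsTraceSystem

variable {V ι κ : Type*} {H : SimpleGraph ι} {K : SimpleGraph κ} {B R : SimpleGraph V}
  {L : V → Set ι}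

theorem not_blue_of_isVertexCover (hL : IsTraceSystem H B R L) (hH : ¬H.IsBipartite) {u v : V}
    (hu : H.IsVertexCover (L u)) (hv : H.IsVertexCover (L v)) : ¬B.Adj u v := fun huv ↦
  (inter_nonempty_of_isVertexCover hH hu hv).ne_empty (hL.disjoint_of_blue huv).inter_eq

theorem not_adj_of_blue_of_blue (hL : IsTraceSystem H B R L) (hH : ¬H.IsBipartite) {u p q : V}
    (hu : H.IsVertexCover (L u)) (hup : B.Adj u p) (huq : B.Adj u q) : ¬(B ⊔ R).Adj p q := by
  intro hpq
  have hcover := hL.isVertexCover_of_red (red_of_blue_of_blue hL.blue_cliqueFree hup huq hpq)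
  refine (inter_nonempty_of_isVertexCover hH hu hcover).ne_empty
    (Set.disjoint_iff_inter_eq_empty.1 ?_)
  exact Set.disjoint_union_right.2 ⟨hL.disjoint_of_blue hup, hL.disjoint_of_blue huq⟩

theorem not_red_of_isVertexCover (hL : IsTraceSystem H B R L) (hH : ¬H.IsBipartite) {a u v : V}
    (hu : H.IsVertexCover (L u)) (hv : H.IsVertexCover (L v)) (huv : (B ⊔ R).Adj u v)
    (hau : R.Adj a u) : ¬R.Adj a v := fun hav ↦
  not_adj_of_cliqueFree_three hL.red_cliqueFree hau hav
    (huv.resolve_left (hL.not_blue_of_isVertexCover hH hu hv))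

/-- Hypothesis `hc` holds in the application because `c` is a vertex with empty trace: the traces of
its red neighbors are then vertex covers. -/
theorem not_isVertexCover_of_join (hL : IsTraceSystem H B R L) (hH : ¬H.IsBipartite)
    (hK : ¬K.IsBipartite) (ψ : K →g B ⊔ R) {a b c : V} (hab : (B ⊔ R).Adj a b)
    (ha : ∀ k, (B ⊔ R).Adj a (ψ k)) (hb : ∀ k, (B ⊔ R).Adj b (ψ k))
    (hc : ∀ k, B.Adj c (ψ k) ∨ H.IsVertexCover (L (ψ k))) : ¬H.IsVertexCover (L b) := by
  intro hLb
  have hB := hL.blue_cliqueFree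
  rcases hab with hab | hab
  · have hred k : R.Adj b (ψ k) := (hb k).resolve_left fun hbk ↦
      hL.not_adj_of_blue_of_blue hH hLb hab.symm hbk (ha k)
    obtain ⟨k, l, hkl, hiff⟩ := exists_adj_iff_of_not_isBipartite hK fun k ↦ B.Adj c (ψ k)
    have hblue := blue_of_red_of_red hL.red_cliqueFree (hred k) (hred l) (ψ.map_adj hkl)
    by_cases hk : B.Adj c (ψ k)
    · exact not_adj_of_cliqueFree_three hB hk (hiff.1 hk) hblue
    · exact hL.not_blue_of_isVertexCover hH ((hc k).resolve_left hk)
        ((hc l).resolve_left (hk ∘ hiff.2)) hblue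
  · have hindep : K.IsIndepSet {k | B.Adj b (ψ k)} := isIndepSet_iff_forall_not_adj.2
      fun k hk l hl hkl ↦ hL.not_adj_of_blue_of_blue hH hLb hk hl (ψ.map_adj hkl)
    obtain ⟨k, l, hkl, hk, hl⟩ := exists_adj_notMem_of_isIndepSet hK hindep
    exact not_adj_of_red_star hB hL.red_cliqueFree hab.symm ((hb k).resolve_left hk)
      ((hb l).resolve_left hl) (ha k) (ha l) (ψ.map_adj hkl)

theorem not_blue_join (hL : IsTraceSystem H B R L) (hH : ¬H.IsBipartite)
    (hK : ¬K.IsBipartite) (ψ : K →g B ⊔ R) {a b c : V}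
    (ha : ∀ k, (B ⊔ R).Adj a (ψ k)) (hb : ∀ k, (B ⊔ R).Adj b (ψ k))
    (hc : ∀ k, B.Adj c (ψ k) ∨ H.IsVertexCover (L (ψ k))) (hcb : B.Adj c b) : ¬B.Adj a b := by
  intro hab
  have hB := hL.blue_cliqueFree
  have hbred {k} (hk : B.Adj c (ψ k) ∨ B.Adj a (ψ k)) : R.Adj b (ψ k) :=
    hk.elim (fun h ↦ red_of_blue_of_blue hB hcb h (hb k))
      fun h ↦ red_of_blue_of_blue hB hab h (hb k)
  obtain ⟨k, l, hkl, hiff⟩ := exists_adj_iff_of_not_isBipartite hK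
    fun k ↦ B.Adj c (ψ k) ∨ B.Adj a (ψ k)
  have hψ := ψ.map_adj hkl
  by_cases hk : B.Adj c (ψ k) ∨ B.Adj a (ψ k)
  · have hl := hiff.1 hk
    have hblue := blue_of_red_of_red hL.red_cliqueFree (hbred hk) (hbred hl) hψ
    have hcover {m n} (hm : B.Adj c (ψ m) ∨ B.Adj a (ψ m)) (hcm : ¬B.Adj c (ψ m))
        (hmn : B.Adj (ψ m) (ψ n)) : False :=
      hL.not_adj_of_blue_of_blue hH ((hc m).resolve_left hcm) (hm.resolve_left hcm).symm hmn (ha n)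
    by_cases hck : B.Adj c (ψ k)
    · by_cases hcl : B.Adj c (ψ l)
      · exact not_adj_of_cliqueFree_three hB hck hcl hblue
      · exact hcover hl hcl hblue.symm
    · exact hcover hk hck hblue
  · obtain ⟨hck, hak⟩ := not_or.1 hk
    obtain ⟨hcl, hal⟩ := not_or.1 (hk ∘ hiff.2)
    exact hL.not_red_of_isVertexCover hH ((hc k).resolve_left hck) ((hc l).resolve_left hcl) hψ
      ((ha k).resolve_left hak) ((ha l).resolve_left hal)

theorem not_red_join (hL : IsTraceSystem H B R L) (hH : ¬H.IsBipartite)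
    (hK : ¬K.IsBipartite) (ψ : K →g B ⊔ R) {a b c : V}
    (ha : ∀ k, (B ⊔ R).Adj a (ψ k)) (hb : ∀ k, (B ⊔ R).Adj b (ψ k))
    (hc : ∀ k, B.Adj c (ψ k) ∨ H.IsVertexCover (L (ψ k))) (hcb : B.Adj c b) : ¬R.Adj a b := by
  intro hab
  have hB := hL.blue_cliqueFree
  obtain ⟨k, l, hkl, hiff⟩ := exists_adj_iff_of_not_isBipartite hK fun k ↦ B.Adj b (ψ k)
  have hψ := ψ.map_adj hkl
  by_cases hk : B.Adj b (ψ k)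
  · have hcover {m} (hm : B.Adj b (ψ m)) : H.IsVertexCover (L (ψ m)) :=
      (hc m).resolve_left fun hcm ↦ not_adj_of_cliqueFree_three hB hcb hcm hm
    have hred {m} (hm : B.Adj b (ψ m)) : R.Adj a (ψ m) := (ha m).resolve_left fun ham ↦
      hL.not_adj_of_blue_of_blue hH (hcover hm) ham.symm hm.symm (.inr hab)
    have hl := hiff.1 hk
    exact hL.not_red_of_isVertexCover hH (hcover hk) (hcover hl) hψ (hred hk) (hred hl)
  · exact not_adj_of_red_star hB hL.red_cliqueFree hab.symm ((hb k).resolve_left hk)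
      ((hb l).resolve_left (hk ∘ hiff.2)) (ha k) (ha l) hψ

theorem not_adj_of_join (hL : IsTraceSystem H B R L) (hH : ¬H.IsBipartite)
    (hK : ¬K.IsBipartite) (ψ : K →g B ⊔ R) {a b c : V}
    (ha : ∀ k, (B ⊔ R).Adj a (ψ k)) (hb : ∀ k, (B ⊔ R).Adj b (ψ k))
    (hc : ∀ k, B.Adj c (ψ k) ∨ H.IsVertexCover (L (ψ k)))
    (hcb : B.Adj c b ∨ H.IsVertexCover (L b)) : ¬(B ⊔ R).Adj a b := by
  intro hab
  have hcb := hcb.resolve_right (hL.not_isVertexCover_of_join hH hK ψ hab ha hb hc)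
  exact hab.elim (hL.not_blue_join hH hK ψ ha hb hc hcb) (hL.not_red_join hH hK ψ ha hb hc hcb)

end IsTraceSystem

section FiveCycle

theorem cycleGraph_five_adj_iff {i j : Fin 5} :
    (cycleGraph 5).Adj i j ↔ j = i + 1 ∨ j = i - 1 := by
  decide +revert

theorem eq_of_fin_five (i j : Fin 5) : j = i ∨ j = i + 1 ∨ j = i + 2 ∨ j = i - 2 ∨ j = i - 1 := by
  decide +revert

theorem subset_pair_of_isIndepSet {s : Set (Fin 5)} (hs : (cycleGraph 5).IsIndepSet s) :
    ∃ b, s ⊆ {b + 1, b - 1} := by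
  rw [isIndepSet_iff_forall_not_adj] at hs
  lift s to Finset (Fin 5) using s.toFinite
  simp only [Set.subset_def, Finset.mem_coe, Set.mem_insert_iff, Set.mem_singleton_iff] at hs ⊢
  revert s
  decide

theorem exists_adj_adj_notMem_of_isIndepSet {s : Set (Fin 5)} (hs : (cycleGraph 5).IsIndepSet s)
    {i : Fin 5} (hi : i ∈ s) :
    ∃ j k, (cycleGraph 5).Adj i j ∧ (cycleGraph 5).Adj k j ∧ j ∉ s ∧ k ∉ s := by
  rw [isIndepSet_iff_forall_not_adj] at hs
  lift s to Finset (Fin 5) using s.toFinite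
  simp only [Finset.mem_coe] at *
  decide +revert

theorem maximal_or_subset_singleton_of_isIndepSet {s : Set (Fin 5)}
    (hs : (cycleGraph 5).IsIndepSet s) :
    Maximal (cycleGraph 5).IsIndepSet s ∨ ∃ i, s ⊆ {i} := by
  obtain ⟨b, hb⟩ := subset_pair_of_isIndepSet hs
  by_cases hmem : b + 1 ∈ s ∧ b - 1 ∈ s
  · refine .inl ⟨hs, fun t ht hst i hi ↦ ?_⟩
    rw [isIndepSet_iff_forall_not_adj] at ht
    have hadj : i = b + 1 ∨ i = b - 1 ∨ (cycleGraph 5).Adj i (b + 1) ∨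
        (cycleGraph 5).Adj i (b - 1) := by
      clear *-
      decide +revert
    rcases hadj with rfl | rfl | h | h
    · exact hmem.1
    · exact hmem.2
    · exact absurd h (ht hi (hst hmem.1))
    · exact absurd h (ht hi (hst hmem.2))
  · rcases not_and_or.1 hmem with h | h
    · exact .inr ⟨b - 1, (Set.subset_insert_iff_of_notMem h).1 hb⟩
    · exact .inr ⟨b + 1, (Set.subset_insert_iff_of_notMem h).1 (Set.pair_comm _ _ ▸ hb)⟩

theorem maximal_isIndepSet_of_isVertexCover_union {s t : Set (Fin 5)}
    (hs : (cycleGraph 5).IsIndepSet s) (ht : (cycleGraph 5).IsIndepSet t)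
    (hst : (cycleGraph 5).IsVertexCover (s ∪ t)) :
    Maximal (cycleGraph 5).IsIndepSet s ∨ Maximal (cycleGraph 5).IsIndepSet t := by
  rcases maximal_or_subset_singleton_of_isIndepSet hs with hs | ⟨i, hi⟩
  · exact .inl hs
  rcases maximal_or_subset_singleton_of_isIndepSet ht with ht | ⟨j, hj⟩
  · exact .inr ht
  have hpair : ∀ i j : Fin 5, ¬(cycleGraph 5).IsVertexCover ({i} ∪ {j}) := by
    simp only [IsVertexCover, Set.mem_union, Set.mem_singleton_iff]
    decide
  exact absurd (hst.subset (Set.union_subset_union hi hj)) (hpair i j)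

theorem isVertexCover_insert_iff {i : Fin 5} {s : Set (Fin 5)} :
    (cycleGraph 5).IsVertexCover (insert i s) ↔
      (i + 1 ∈ s ∨ i + 2 ∈ s) ∧ (i + 2 ∈ s ∨ i - 2 ∈ s) ∧ (i - 2 ∈ s ∨ i - 1 ∈ s) := by
  lift s to Finset (Fin 5) using s.toFinite
  simp only [IsVertexCover, Set.mem_insert_iff, Finset.mem_coe]
  decide +revert

theorem subset_and_subset_of_isVertexCover_insert {s t : Set (Fin 5)} {i : Fin 5}
    (hst : Disjoint s t) (hs : (cycleGraph 5).IsVertexCover (insert i s))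
    (ht : (cycleGraph 5).IsVertexCover (insert i t)) :
    {i + 1, i - 2} ⊆ s ∧ {i + 2, i - 1} ⊆ t ∨ {i + 1, i - 2} ⊆ t ∧ {i + 2, i - 1} ⊆ s := by
  rw [isVertexCover_insert_iff] at hs ht
  simp only [Set.insert_subset_iff, Set.singleton_subset_iff, Set.disjoint_left] at *
  grind

/-- In the application `s`, `p`, `m`, `n`, `t` are the traces of the consecutive vertices of a blue
5-cycle. -/
theorem eq_singleton_of_isVertexCover_insert {s p m n t : Set (Fin 5)} {i : Fin 5}
    (hs : {i + 1, i - 2} ⊆ s) (ht : {i + 2, i - 1} ⊆ t) (hsp : Disjoint s p) (hpm : Disjoint p m)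
    (hmn : Disjoint m n) (hnt : Disjoint n t) (hp₀ : p.Nonempty) (hn₀ : n.Nonempty)
    (hm : (cycleGraph 5).IsVertexCover (insert i m))
    (hp : i ∉ p ∨ (cycleGraph 5).IsVertexCover (insert i p))
    (hn : i ∉ n ∨ (cycleGraph 5).IsVertexCover (insert i n)) :
    p = {i - 1} ∧ {i + 2, i - 2} ⊆ m ∧ n = {i + 1} := by
  rw [isVertexCover_insert_iff] at hm hp hn
  simp only [Set.insert_subset_iff, Set.singleton_subset_iff, Set.disjoint_left] at *
  have hm_sub_two : i - 2 ∈ m := by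
    by_contra hmem
    have hp_sub : p ⊆ {i} := fun x hx ↦ by have := eq_of_fin_five i x; grind
    grind [hp₀.subset_singleton_iff.1 hp_sub]
  have hm_add_two : i + 2 ∈ m := by
    by_contra hmem
    have hn_sub : n ⊆ {i} := fun x hx ↦ by have := eq_of_fin_five i x; grind
    grind [hn₀.subset_singleton_iff.1 hn_sub]
  refine ⟨hp₀.subset_singleton_iff.1 fun x hx ↦ ?_, ⟨hm_add_two, hm_sub_two⟩,
    hn₀.subset_singleton_iff.1 fun x hx ↦ ?_⟩
  all_goals
    have := eq_of_fin_five i x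
    grind

theorem singleton_mem_iff_adj_of_isVertexCover_insert {s p m n t : Set (Fin 5)} {i j : Fin 5}
    (hs : {i + 1, i - 2} ⊆ s) (ht : {i + 2, i - 1} ⊆ t) (hsp : Disjoint s p) (hpm : Disjoint p m)
    (hmn : Disjoint m n) (hnt : Disjoint n t) (hp₀ : p.Nonempty) (hn₀ : n.Nonempty)
    (hm : (cycleGraph 5).IsVertexCover (insert i m))
    (hp : i ∉ p ∨ (cycleGraph 5).IsVertexCover (insert i p))
    (hn : i ∉ n ∨ (cycleGraph 5).IsVertexCover (insert i n)) :
    {j} ∈ ({s, p, m, n, t} : Set (Set (Fin 5))) ↔ (cycleGraph 5).Adj i j := by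
  obtain ⟨rfl, hm_sub, rfl⟩ :=
    eq_singleton_of_isVertexCover_insert hs ht hsp hpm hmn hnt hp₀ hn₀ hm hp hn
  have hne {u : Set (Fin 5)} {a b : Fin 5} (hab : a ≠ b) (hu : {a, b} ⊆ u) : {j} ≠ u := by
    rintro rfl
    simp only [Set.insert_subset_iff, Set.singleton_subset_iff, Set.mem_singleton_iff] at hu
    exact hab (hu.1.trans hu.2.symm)
  have hs_ne := hne (by clear *-; decide +revert) hs
  have hm_ne := hne (by clear *-; decide +revert) hm_sub
  have ht_ne := hne (by clear *-; decide +revert) ht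
  simp only [Set.mem_insert_iff, Set.mem_singleton_iff, hs_ne, hm_ne, ht_ne, false_or, or_false,
    Set.singleton_eq_singleton_iff, cycleGraph_five_adj_iff]
  exact or_comm

theorem range_eq_of_fin_five {α : Type*} (f : Fin 5 → α) (b : Fin 5) :
    Set.range f = {f (b + 2), f (b + 1), f b, f (b - 1), f (b - 2)} := by
  ext a
  simp only [Set.mem_range, Set.mem_insert_iff, Set.mem_singleton_iff]
  constructor
  · rintro ⟨l, rfl⟩
    rcases eq_of_fin_five b l with rfl | rfl | rfl | rfl | rfl <;> simp
  · rintro (rfl | rfl | rfl | rfl | rfl) <;> exact ⟨_, rfl⟩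

theorem exists_eq_singleton_of_disjoint {α : Type*} {s t : Set α} (hs : s.Nonempty)
    (ht : t.Nonempty) (hst : Disjoint s t) (hfin : (s ∪ t).Finite) (hcard : (s ∪ t).ncard ≤ 3) :
    ∃ a, s = {a} ∨ t = {a} := by
  obtain ⟨hs_fin, ht_fin⟩ := Set.finite_union.1 hfin
  rw [Set.ncard_union_eq hst hs_fin ht_fin] at hcard
  have := (Set.ncard_pos hs_fin).2 hs
  have := (Set.ncard_pos ht_fin).2 ht
  rw [exists_or, ← Set.ncard_eq_one, ← Set.ncard_eq_one]
  lia

end FiveCycle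

namespace IsTraceSystem

section BlueCycles

variable {V ι κ : Type*} {H : SimpleGraph ι} {K : SimpleGraph κ} {B R : SimpleGraph V}
  {L : V → Set ι}

theorem trace_nonempty (hL : IsTraceSystem H B R L) (hH : ¬H.IsBipartite) (hK : ¬K.IsBipartite)
    (χ : K →g B) {y : V} (hy : ∀ k, (B ⊔ R).Adj y (χ k)) : (L y).Nonempty := by
  by_contra hempty
  have hcover {k} (hk : ¬B.Adj y (χ k)) : H.IsVertexCover (L (χ k)) := by
    have := hL.isVertexCover_of_red ((hy k).resolve_left hk)
    rwa [Set.not_nonempty_iff_eq_empty.1 hempty, Set.empty_union] at this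
  obtain ⟨k, l, hkl, hk, hl⟩ :=
    exists_adj_notMem_of_isIndepSet hK (isIndepSet_setOf_adj hL.blue_cliqueFree χ y)
  exact hL.not_blue_of_isVertexCover hH (hcover hk) (hcover hl) (χ.map_adj hkl)

theorem isIndepSet_mem_trace (hL : IsTraceSystem H B R L) (ψ : K →g B) (x : ι) :
    K.IsIndepSet {k | x ∈ L (ψ k)} :=
  isIndepSet_iff_forall_not_adj.2 fun _ hk _ hl hkl ↦
    Set.disjoint_left.1 (hL.disjoint_of_blue (ψ.map_adj hkl)) hk hl

theorem exists_notMem_trace (hL : IsTraceSystem H B R L) (hK : ¬K.IsBipartite) (ψ : K →g B)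
    (x x' : ι) : ∃ k, x ∉ L (ψ k) ∧ x' ∉ L (ψ k) :=
  inter_nonempty_of_isVertexCover hK (isVertexCover_compl.2 (hL.isIndepSet_mem_trace ψ x))
    (isVertexCover_compl.2 (hL.isIndepSet_mem_trace ψ x'))

end BlueCycles

section FiveCycles

variable {V : Type*} {B R : SimpleGraph V} {L : V → Set (Fin 5)}

theorem exists_singleton_mem_range_trace (hL : IsTraceSystem (cycleGraph 5) B R L)
    (ψ χ : cycleGraph 5 →g B) (hψχ : ∀ k l, (B ⊔ R).Adj (ψ k) (χ l)) :
    ∃ i, {i} ∈ Set.range (L ∘ ψ) ∨ {i} ∈ Set.range (L ∘ χ) := by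
  have h₅ := not_isBipartite_cycleGraph_five
  obtain ⟨k, hk₀, hk₁⟩ := hL.exists_notMem_trace h₅ ψ 0 1
  obtain ⟨l, hl₀, hl₁⟩ := hL.exists_notMem_trace h₅ χ 0 1
  have hblue : B.Adj (ψ k) (χ l) := (hψχ k l).resolve_right fun hred ↦
    (@hL.isVertexCover_of_red _ _ hred 0 1 (by decide)).elim (·.elim hk₀ hl₀) (·.elim hk₁ hl₁)
  have hsub : L (ψ k) ∪ L (χ l) ⊆ {2, 3, 4} := by
    intro i hi
    have := eq_of_fin_five 0 i
    grind
  obtain ⟨i, hi⟩ := exists_eq_singleton_of_disjoint (hL.trace_nonempty h₅ h₅ χ (hψχ k))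
    (hL.trace_nonempty h₅ h₅ ψ fun k ↦ (hψχ k l).symm) (hL.disjoint_of_blue hblue)
    (Set.toFinite _) ((Set.ncard_le_ncard hsub).trans (by simp))
  exact ⟨i, hi.imp (⟨k, ·⟩) (⟨l, ·⟩)⟩

theorem singleton_mem_range_trace_iff_adj (hL : IsTraceSystem (cycleGraph 5) B R L)
    (χ : cycleGraph 5 →g B) {y : V} (hy : ∀ l, (B ⊔ R).Adj y (χ l))
    (hne : ∀ l, (L (χ l)).Nonempty) {i j : Fin 5} (hi : L y = {i}) :
    {j} ∈ Set.range (L ∘ χ) ↔ (cycleGraph 5).Adj i j := by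
  obtain ⟨b, hb⟩ := subset_pair_of_isIndepSet (isIndepSet_setOf_adj hL.blue_cliqueFree χ y)
  have hcover {l} (hl : ¬B.Adj y (χ l)) : (cycleGraph 5).IsVertexCover (insert i (L (χ l))) := by
    have := hL.isVertexCover_of_red ((hy l).resolve_left hl)
    rwa [hi, Set.singleton_union] at this
  have hcover_far {l} (hl : l ≠ b + 1 ∧ l ≠ b - 1) := hcover fun h ↦ not_or.2 hl (hb h)
  have hcover_or l : i ∉ L (χ l) ∨ (cycleGraph 5).IsVertexCover (insert i (L (χ l))) := by
    by_cases hl : B.Adj y (χ l)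
    · exact .inl (Set.disjoint_singleton_left.1 (hi ▸ hL.disjoint_of_blue hl))
    · exact .inr (hcover hl)
  have hdisj {k l} (hkl : (cycleGraph 5).Adj k l) : Disjoint (L (χ k)) (L (χ l)) :=
    hL.disjoint_of_blue (χ.map_adj hkl)
  obtain ⟨h₁, h₂, h₃, h₄, h₅⟩ : (cycleGraph 5).Adj (b + 2) (b + 1) ∧ (cycleGraph 5).Adj (b + 1) b ∧
      (cycleGraph 5).Adj b (b - 1) ∧ (cycleGraph 5).Adj (b - 1) (b - 2) ∧
      (cycleGraph 5).Adj (b - 2) (b + 2) := by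
    clear *-
    decide +revert
  have hb : (cycleGraph 5).IsVertexCover (insert i (L (χ b))) :=
    hcover_far (by clear *-; decide +revert)
  rw [range_eq_of_fin_five _ b]
  obtain ⟨hs, ht⟩ | ⟨hs, ht⟩ := subset_and_subset_of_isVertexCover_insert (hdisj h₅.symm)
    (hcover_far (by clear *-; decide +revert)) (hcover_far (by clear *-; decide +revert))
  · exact singleton_mem_iff_adj_of_isVertexCover_insert hs ht (hdisj h₁) (hdisj h₂) (hdisj h₃)
      (hdisj h₄) (hne _) (hne _) hb (hcover_or _) (hcover_or _)
  · rw [← singleton_mem_iff_adj_of_isVertexCover_insert hs ht (hdisj h₄.symm) (hdisj h₃.symm)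
      (hdisj h₂.symm) (hdisj h₁.symm) (hne _) (hne _) hb (hcover_or _) (hcover_or _)]
    simp only [Function.comp_apply, Set.mem_insert_iff, Set.mem_singleton_iff]
    tauto

theorem not_forall_adj_of_blue_cycles (hL : IsTraceSystem (cycleGraph 5) B R L)
    (ψ χ : cycleGraph 5 →g B) : ¬∀ k l, (B ⊔ R).Adj (ψ k) (χ l) := by
  wlog hψ : ∃ i, {i} ∈ Set.range (L ∘ ψ) generalizing ψ χ with hwlog
  · intro hψχ
    obtain ⟨i, hψ' | hχ⟩ := hL.exists_singleton_mem_range_trace ψ χ hψχ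
    · exact hψ ⟨i, hψ'⟩
    · exact hwlog χ ψ ⟨i, hχ⟩ fun l k ↦ (hψχ k l).symm
  intro hψχ
  have h₅ := not_isBipartite_cycleGraph_five
  have hψ_iff {i j l} (hl : L (χ l) = {i}) :=
    hL.singleton_mem_range_trace_iff_adj ψ (j := j) (fun k ↦ (hψχ k l).symm)
      (fun k ↦ hL.trace_nonempty h₅ h₅ χ (hψχ k)) hl
  have hχ_iff {i j k} (hk : L (ψ k) = {i}) :=
    hL.singleton_mem_range_trace_iff_adj χ (j := j) (hψχ k)
      (fun l ↦ hL.trace_nonempty h₅ h₅ ψ fun k ↦ (hψχ k l).symm) hk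
  obtain ⟨i, k, hk⟩ := hψ
  obtain ⟨l, hl⟩ := (hχ_iff hk).2 (cycleGraph_five_adj_iff.2 (.inl rfl))
  obtain ⟨l', hl'⟩ := (hχ_iff hk).2 (cycleGraph_five_adj_iff.2 (.inr rfl))
  have hi := (hψ_iff hl').1 ((hψ_iff hl).2 (cycleGraph_five_adj_iff.2 (.inl rfl)))
  have hnot : ∀ i : Fin 5, ¬(cycleGraph 5).Adj (i - 1) (i + 1 + 1) := by decide
  exact hnot i hi

end FiveCycles

section RedCycles

variable {V ι κ μ : Type*} {H : SimpleGraph ι} {K : SimpleGraph κ} {M : SimpleGraph μ}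
  {B R : SimpleGraph V} {L : V → Set ι}

theorem red_of_mem_trace (hL : IsTraceSystem H B R L) {u v : V} (huv : (B ⊔ R).Adj u v) {x : ι}
    (hu : x ∈ L u) (hv : x ∈ L v) : R.Adj u v :=
  huv.resolve_left fun h ↦ Set.disjoint_left.1 (hL.disjoint_of_blue h) hu hv

theorem isVertexCover_setOf_mem_trace (hL : IsTraceSystem H B R L) (ψ : K →g R) {x x' : ι}
    (hxx' : H.Adj x x') : K.IsVertexCover ({k | x ∈ L (ψ k)} ∪ {k | x' ∈ L (ψ k)}) := by
  intro k l hkl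
  have := hL.isVertexCover_of_red (ψ.map_adj hkl) hxx'
  simp only [Set.mem_union, Set.mem_ofPred_eq] at this ⊢
  tauto

theorem setOf_mem_trace_subset_red (hL : IsTraceSystem H B R L) {χ : μ → V} {u : V} {x : ι}
    (hu : ∀ l, (B ⊔ R).Adj u (χ l)) (hx : x ∈ L u) : {l | x ∈ L (χ l)} ⊆ {l | R.Adj u (χ l)} :=
  fun l hl ↦ hL.red_of_mem_trace (hu l) hx hl

theorem isIndepSet_setOf_mem_trace (hL : IsTraceSystem H B R L) (χ : M →g R) {u : V} {x : ι}
    (hu : ∀ l, (B ⊔ R).Adj u (χ l)) (hx : x ∈ L u) : M.IsIndepSet {l | x ∈ L (χ l)} :=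
  (isIndepSet_setOf_adj hL.red_cliqueFree χ u).mono (hL.setOf_mem_trace_subset_red hu hx)

theorem forall_notMem_trace_of_adj (hL : IsTraceSystem H B R L) (hK : ¬K.IsBipartite)
    (ψ : K →g R) {χ : μ → V} (hψχ : ∀ k l, (B ⊔ R).Adj (ψ k) (χ l)) {x x' : ι}
    (hxx' : H.Adj x x') (hx : ∀ k, x ∉ L (ψ k)) (l : μ) : x' ∉ L (χ l) := by
  intro hl
  refine not_isVertexCover_of_isIndepSet hK
    (hL.isIndepSet_setOf_mem_trace ψ (fun k ↦ (hψχ k l).symm) hl) ?_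
  have hempty : {k | x ∈ L (ψ k)} = ∅ := Set.eq_empty_of_forall_notMem hx
  have hcover := hL.isVertexCover_setOf_mem_trace ψ hxx'
  rwa [hempty, Set.empty_union] at hcover

theorem exists_mem_trace_or_mem_trace (hL : IsTraceSystem H B R L) (hK : ¬K.IsBipartite)
    (ψ : K →g R) {x x' : ι} (hxx' : H.Adj x x') : ∃ k, x ∈ L (ψ k) ∨ x' ∈ L (ψ k) := by
  obtain ⟨k, -, -, hk, -⟩ :=
    exists_adj_mem_of_isVertexCover hK (hL.isVertexCover_setOf_mem_trace ψ hxx')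
  exact ⟨k, hk⟩

theorem exists_mem_trace (hL : IsTraceSystem H B R L) (hH : H.Preconnected) (hH₂ : ¬H.IsBipartite)
    (hK : ¬K.IsBipartite) (hM : ¬M.IsBipartite) (ψ : K →g R) (χ : M →g R)
    (hψχ : ∀ k l, (B ⊔ R).Adj (ψ k) (χ l)) (x : ι) : ∃ k, x ∈ L (ψ k) := by
  by_contra! hx
  have hall z : (∀ k, z ∉ L (ψ k)) ∨ ∀ l, z ∉ L (χ l) := by
    obtain ⟨p⟩ := hH z x
    induction p with
    | nil => exact .inl hx
    | cons h _ ih =>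
      exact (ih hx).symm.imp (hL.forall_notMem_trace_of_adj hM χ (fun l k ↦ (hψχ k l).symm) h.symm)
        (hL.forall_notMem_trace_of_adj hK ψ hψχ h.symm)
  obtain ⟨y, z, hyz, hiff⟩ := exists_adj_iff_of_not_isBipartite hH₂ fun z ↦ ∀ k, z ∉ L (ψ k)
  by_cases hy : ∀ k, y ∉ L (ψ k)
  · obtain ⟨k, hk⟩ := hL.exists_mem_trace_or_mem_trace hK ψ hyz
    exact hk.elim (hy k) (hiff.1 hy k)
  · have hy' := (hall y).resolve_left hy
    have hz' := (hall z).resolve_left (hy ∘ hiff.2)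
    obtain ⟨l, hl⟩ := hL.exists_mem_trace_or_mem_trace hM χ hyz
    exact hl.elim (hy' l) (hz' l)

theorem setOf_mem_trace_subset_of_mem (hL : IsTraceSystem H B R L) (χ : M →g R) {u : V}
    {x₀ x : ι} (hu : ∀ l, (B ⊔ R).Adj u (χ l))
    (hmax : Maximal M.IsIndepSet {l | x₀ ∈ L (χ l)}) (hx₀ : x₀ ∈ L u) (hx : x ∈ L u) :
    {l | x ∈ L (χ l)} ⊆ {l | x₀ ∈ L (χ l)} := by
  rw [hmax.eq_of_subset (isIndepSet_setOf_adj hL.red_cliqueFree χ u)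
    (hL.setOf_mem_trace_subset_red hu hx₀)]
  exact hL.setOf_mem_trace_subset_red hu hx

/-- Call `x` of the first kind if its trace in the copy of `K` meets that of `x₀`. Both kinds are
independent, so `H` would be bipartite. -/
theorem not_maximal_isIndepSet_setOf_mem_trace (hL : IsTraceSystem H B R L) (hH : ¬H.IsBipartite)
    (hK : ¬K.IsBipartite) (ψ : K →g R) (χ : M →g R) (hψχ : ∀ k l, (B ⊔ R).Adj (ψ k) (χ l))
    (hψ : ∀ x, ∃ k, x ∈ L (ψ k)) (hχ : ∀ x, ∃ l, x ∈ L (χ l)) {x₀ : ι}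
    (hψ_max : Maximal K.IsIndepSet {k | x₀ ∈ L (ψ k)}) :
    ¬Maximal M.IsIndepSet {l | x₀ ∈ L (χ l)} := by
  intro hχ_max
  have hsub_χ {x k} (hx₀ : x₀ ∈ L (ψ k)) (hx : x ∈ L (ψ k)) :=
    hL.setOf_mem_trace_subset_of_mem χ (hψχ k) hχ_max hx₀ hx
  have hsub_ψ {x l} (hx₀ : x₀ ∈ L (χ l)) (hx : x ∈ L (χ l)) :=
    hL.setOf_mem_trace_subset_of_mem ψ (fun k ↦ (hψχ k l).symm) hψ_max hx₀ hx
  obtain ⟨x, y, hxy, hiff⟩ :=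
    exists_adj_iff_of_not_isBipartite hH fun x ↦ ∃ k, x₀ ∈ L (ψ k) ∧ x ∈ L (ψ k)
  by_cases hx : ∃ k, x₀ ∈ L (ψ k) ∧ x ∈ L (ψ k)
  · have hsub {z} (hz : ∃ k, x₀ ∈ L (ψ k) ∧ z ∈ L (ψ k)) :
        {k | z ∈ L (ψ k)} ⊆ {k | x₀ ∈ L (ψ k)} := by
      obtain ⟨k, hk₀, hk⟩ := hz
      obtain ⟨l, hl⟩ := hχ z
      exact hsub_ψ (hsub_χ hk₀ hk hl) hl
    exact not_isVertexCover_of_isIndepSet hK hψ_max.prop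
      ((hL.isVertexCover_setOf_mem_trace ψ hxy).subset
        (Set.union_subset (hsub hx) (hsub (hiff.1 hx))))
  · have hdisj_χ {z l} (hz : ¬∃ k, x₀ ∈ L (ψ k) ∧ z ∈ L (ψ k)) (hl : x₀ ∈ L (χ l)) :
        z ∉ L (χ l) := fun hzl ↦ by
      obtain ⟨k, hk⟩ := hψ z
      exact hz ⟨k, hsub_ψ hl hzl hk, hk⟩
    obtain ⟨k, hk⟩ := hψ x₀
    obtain ⟨l, hl⟩ := hχ x₀
    have hy := hx ∘ hiff.2
    rcases hL.isVertexCover_of_red (hL.red_of_mem_trace (hψχ k l) hk hl) hxy with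
      (h | h) | (h | h)
    · exact hx ⟨k, hk, h⟩
    · exact hdisj_χ hx hl h
    · exact hy ⟨k, hk, h⟩
    · exact hdisj_χ hy hl h

theorem isVertexCover_setOf_maximal (hL : IsTraceSystem H B R L) (ψ : cycleGraph 5 →g R)
    {χ : μ → V} (hψχ : ∀ k l, (B ⊔ R).Adj (ψ k) (χ l)) (hχ : ∀ x, ∃ l, x ∈ L (χ l)) :
    H.IsVertexCover {x | Maximal (cycleGraph 5).IsIndepSet {k | x ∈ L (ψ k)}} := by
  intro x y hxy
  have hindep z : (cycleGraph 5).IsIndepSet {k | z ∈ L (ψ k)} := by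
    obtain ⟨l, hl⟩ := hχ z
    exact hL.isIndepSet_setOf_mem_trace ψ (fun k ↦ (hψχ k l).symm) hl
  exact maximal_isIndepSet_of_isVertexCover_union (hindep x) (hindep y)
    (hL.isVertexCover_setOf_mem_trace ψ hxy)

theorem not_forall_adj_of_red_cycles (hL : IsTraceSystem H B R L) (hH : H.Preconnected)
    (hH₂ : ¬H.IsBipartite) (ψ χ : cycleGraph 5 →g R) : ¬∀ k l, (B ⊔ R).Adj (ψ k) (χ l) := by
  intro hψχ
  have h₅ := not_isBipartite_cycleGraph_five
  have hχψ l k := (hψχ k l).symm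
  have hψ := hL.exists_mem_trace hH hH₂ h₅ h₅ ψ χ hψχ
  have hχ := hL.exists_mem_trace hH hH₂ h₅ h₅ χ ψ hχψ
  obtain ⟨x₀, hψ_max, hχ_max⟩ := inter_nonempty_of_isVertexCover hH₂
    (hL.isVertexCover_setOf_maximal ψ hψχ hχ) (hL.isVertexCover_setOf_maximal χ hχψ hψ)
  exact hL.not_maximal_isIndepSet_setOf_mem_trace hH₂ h₅ ψ χ hψχ hψ hχ hψ_max hχ_max

end RedCycles

end IsTraceSystem

section RestrictTo

variable {V κ : Type*} {K : SimpleGraph κ} {B R G : SimpleGraph V} {s : Set V}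

/-- The graph obtained from `G` by deleting all edges with an end outside `s`. Unlike `G.induce s`
it lives on all of `V`, so that the two colors keep a common vertex type. -/
def restrictTo (G : SimpleGraph V) (s : Set V) : SimpleGraph V where
  Adj u v := G.Adj u v ∧ u ∈ s ∧ v ∈ s
  symm := ⟨fun _ _ ⟨h, hu, hv⟩ ↦ ⟨h.symm, hv, hu⟩⟩
  loopless := ⟨fun _ h ↦ h.1.ne rfl⟩

theorem restrictTo_cliqueFree {n : ℕ} {w : V} (hG : G.CliqueFree (n + 3))
    (hs : s ⊆ G.neighborSet w) : (restrictTo G s).CliqueFree (n + 2) := by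
  classical
  intro t ht
  have hle : restrictTo G s ≤ G := fun _ _ h ↦ h.1
  refine hG (insert w t) ((ht.mono hle).insert fun u hu ↦ ?_)
  obtain ⟨v, hv, hvu⟩ := Finset.exists_mem_ne (by rw [ht.card_eq]; lia : 1 < t.card) u
  exact hs (ht.isClique hu hv hvu.symm).2.1

theorem sup_restrictTo_adj {u v : V} (huv : (B ⊔ R).Adj u v) (hu : u ∈ s) (hv : v ∈ s) :
    (B ⊔ restrictTo R s).Adj u v :=
  huv.imp_right fun h ↦ ⟨h, hu, hv⟩

/-- A homomorphism into `B ⊔ R` with values in `s`, read as one into `B ⊔ restrictTo R s`. -/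
def restrictToHom (ψ : K →g B ⊔ R) (hψ : ∀ k, ψ k ∈ s) : K →g B ⊔ restrictTo R s :=
  ⟨ψ, fun h ↦ sup_restrictTo_adj (ψ.map_adj h) (hψ _) (hψ _)⟩

end RestrictTo

section RedNeighborhood

variable {V ι κ : Type*} {H : SimpleGraph ι} {K : SimpleGraph κ} {B R : SimpleGraph V} {s : Set V}
  {w : V}

theorem not_adj_of_cliqueFree_four (hR : R.CliqueFree 4) {a b c d : V} (hab : R.Adj a b)
    (hac : R.Adj a c) (had : R.Adj a d) (hbc : R.Adj b c) (hbd : R.Adj b d) : ¬R.Adj c d := by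
  classical
  refine fun hcd ↦ hR {a, b, c, d} ((is3Clique_triple_iff.2 ⟨hbc, hbd, hcd⟩).insert ?_)
  simp [hab, hac, had]

theorem isVertexCover_blue_union (hR : R.CliqueFree 4) (φ : H →g R) {u v : V}
    (hu : ∀ x, (B ⊔ R).Adj u (φ x)) (hv : ∀ x, (B ⊔ R).Adj v (φ x)) (huv : R.Adj u v) :
    H.IsVertexCover ({x | B.Adj u (φ x)} ∪ {x | B.Adj v (φ x)}) := by
  intro x y hxy
  by_contra! h
  obtain ⟨⟨hux, hvx⟩, huy, hvy⟩ := h.imp not_or.1 not_or.1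
  exact not_adj_of_cliqueFree_four hR huv ((hu x).resolve_left hux) ((hu y).resolve_left huy)
    ((hv x).resolve_left hvx) ((hv y).resolve_left hvy) (φ.map_adj hxy)

theorem isTraceSystem_blue (hB : B.CliqueFree 3) (hR : R.CliqueFree 4) (φ : H →g R)
    (hsw : s ⊆ R.neighborSet w) (hsφ : ∀ u ∈ s, ∀ x, (B ⊔ R).Adj u (φ x)) :
    IsTraceSystem H B (restrictTo R s) fun u ↦ {x | B.Adj u (φ x)} where
  blue_cliqueFree := hB
  red_cliqueFree := restrictTo_cliqueFree hR hsw
  disjoint_of_blue _ _ huv := Set.disjoint_left.2 fun _ hu hv ↦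
    not_adj_of_cliqueFree_three hB huv hu hv
  isVertexCover_of_red _ _ huv :=
    isVertexCover_blue_union hR φ (hsφ _ huv.2.1) (hsφ _ huv.2.2) huv.1

end RedNeighborhood

section Cone

variable {V ι κ μ : Type*} {H : SimpleGraph ι} {K : SimpleGraph κ} {M : SimpleGraph μ}
  {B R : SimpleGraph V} {w : V}

theorem not_cliqueFree_six_of_join {G : SimpleGraph V} {a a' b b' c c' : V} (ha : G.Adj a a')
    (hb : G.Adj b b') (hc : G.Adj c c')
    (hab : ∀ x ∈ ({a, a'} : Set V), ∀ y ∈ ({b, b'} : Set V), G.Adj x y)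
    (hac : ∀ x ∈ ({a, a'} : Set V), ∀ y ∈ ({c, c'} : Set V), G.Adj x y)
    (hbc : ∀ x ∈ ({b, b'} : Set V), ∀ y ∈ ({c, c'} : Set V), G.Adj x y) : ¬G.CliqueFree 6 := by
  classical
  simp only [Set.mem_insert_iff, Set.mem_singleton_iff, forall_eq_or_imp, forall_eq] at hab hac hbc
  have h₃ : G.IsNClique 3 {b', c, c'} := is3Clique_triple_iff.2 ⟨hbc.2.1, hbc.2.2, hc⟩
  have h₄ : G.IsNClique 4 {b, b', c, c'} := h₃.insert (by simp [*])
  have h₅ : G.IsNClique 5 {a', b, b', c, c'} := h₄.insert (by simp [*])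
  exact (h₅.insert (a := a) (by simp [*])).not_cliqueFree

theorem not_adj_of_blue_of_cliqueFree_four (hB : B.CliqueFree 3) (hR : R.CliqueFree 4)
    {a b c d : V} (ha : B.Adj w a) (hb : B.Adj w b) (hc : B.Adj w c) (hd : B.Adj w d)
    (hab : (B ⊔ R).Adj a b) (hac : (B ⊔ R).Adj a c) (had : (B ⊔ R).Adj a d)
    (hbc : (B ⊔ R).Adj b c) (hbd : (B ⊔ R).Adj b d) : ¬(B ⊔ R).Adj c d := fun hcd ↦
  not_adj_of_cliqueFree_four hR (red_of_blue_of_blue hB ha hb hab)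
    (red_of_blue_of_blue hB ha hc hac) (red_of_blue_of_blue hB ha hd had)
    (red_of_blue_of_blue hB hb hc hbc) (red_of_blue_of_blue hB hb hd hbd)
    (red_of_blue_of_blue hB hc hd hcd)

theorem exists_red_edge_of_isIndepSet (hK : ¬K.IsBipartite) {ψ : κ → V}
    (hw : ∀ k, (B ⊔ R).Adj w (ψ k)) (hind : K.IsIndepSet {k | B.Adj w (ψ k)}) :
    ∃ k l, K.Adj k l ∧ R.Adj w (ψ k) ∧ R.Adj w (ψ l) := by
  obtain ⟨k, l, hkl, hk, hl⟩ := exists_adj_notMem_of_isIndepSet hK hind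
  exact ⟨k, l, hkl, (hw k).resolve_left hk, (hw l).resolve_left hl⟩

theorem exists_not_isIndepSet_blue (hB : B.CliqueFree 3) (hR : R.CliqueFree 4)
    (hH : ¬H.IsBipartite) (hK : ¬K.IsBipartite) (hM : ¬M.IsBipartite)
    (φ : H →g B ⊔ R) (ψ : K →g B ⊔ R) (χ : M →g B ⊔ R)
    (hφ : ∀ x, (B ⊔ R).Adj w (φ x)) (hψ : ∀ k, (B ⊔ R).Adj w (ψ k))
    (hχ : ∀ l, (B ⊔ R).Adj w (χ l)) (hφψ : ∀ x k, (B ⊔ R).Adj (φ x) (ψ k))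
    (hφχ : ∀ x l, (B ⊔ R).Adj (φ x) (χ l)) (hψχ : ∀ k l, (B ⊔ R).Adj (ψ k) (χ l)) :
    ¬H.IsIndepSet {x | B.Adj w (φ x)} ∨ ¬K.IsIndepSet {k | B.Adj w (ψ k)} ∨
      ¬M.IsIndepSet {l | B.Adj w (χ l)} := by
  by_contra! ⟨hφ_ind, hψ_ind, hχ_ind⟩
  obtain ⟨x, x', hxx', hx, hx'⟩ := exists_red_edge_of_isIndepSet hH hφ hφ_ind
  obtain ⟨k, k', hkk', hk, hk'⟩ := exists_red_edge_of_isIndepSet hK hψ hψ_ind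
  obtain ⟨l, l', hll', hl, hl'⟩ := exists_red_edge_of_isIndepSet hM hχ hχ_ind
  have hred {u v} (huv : (B ⊔ R).Adj u v) (hu : R.Adj w u) (hv : R.Adj w v) :
      (B ⊔ restrictTo R (R.neighborSet w)).Adj u v := sup_restrictTo_adj huv hu hv
  refine not_cliqueFree_six_of_join (hred (φ.map_adj hxx') hx hx') (hred (ψ.map_adj hkk') hk hk')
    (hred (χ.map_adj hll') hl hl') ?_ ?_ ?_
    (sup_cliqueFree_six hB (restrictTo_cliqueFree hR subset_rfl)) <;>
  · rintro _ (rfl | rfl) _ (rfl | rfl) <;> apply hred <;> first | assumption | apply_assumption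

theorem isIndepSet_blue_of_blue_edge (hB : B.CliqueFree 3) (hR : R.CliqueFree 4)
    (ψ : K →g B ⊔ R) {a b : V} (hab : (B ⊔ R).Adj a b) (hwa : B.Adj w a) (hwb : B.Adj w b)
    (ha : ∀ k, (B ⊔ R).Adj a (ψ k)) (hb : ∀ k, (B ⊔ R).Adj b (ψ k)) :
    K.IsIndepSet {k | B.Adj w (ψ k)} :=
  isIndepSet_iff_forall_not_adj.2 fun k hk l hl hkl ↦
    not_adj_of_blue_of_cliqueFree_four hB hR hwa hwb hk hl hab (ha k) (ha l) (hb k) (hb l)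
      (ψ.map_adj hkl)

theorem forall_red_or_forall_red_of_blue_edge (hB : B.CliqueFree 3) (hR : R.CliqueFree 4)
    {ψ : κ → V} {χ : μ → V} (hψ : ∀ k, (B ⊔ R).Adj w (ψ k)) (hχ : ∀ l, (B ⊔ R).Adj w (χ l))
    (hψχ : ∀ k l, (B ⊔ R).Adj (ψ k) (χ l)) {a b : V} (hab : (B ⊔ R).Adj a b) (hwa : B.Adj w a)
    (hwb : B.Adj w b) (haψ : ∀ k, (B ⊔ R).Adj a (ψ k)) (hbψ : ∀ k, (B ⊔ R).Adj b (ψ k))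
    (haχ : ∀ l, (B ⊔ R).Adj a (χ l)) (hbχ : ∀ l, (B ⊔ R).Adj b (χ l)) :
    (∀ k, R.Adj w (ψ k)) ∨ ∀ l, R.Adj w (χ l) := by
  by_contra! h
  obtain ⟨⟨k, hk⟩, l, hl⟩ := h
  exact not_adj_of_blue_of_cliqueFree_four hB hR hwa hwb ((hψ k).resolve_right hk)
    ((hχ l).resolve_right hl) hab (haψ k) (haχ l) (hbψ k) (hbχ l) (hψχ k l)

theorem blue_of_join_red (hB : B.CliqueFree 3) (hR : R.CliqueFree 4) (hK : ¬K.IsBipartite)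
    (hM : ¬M.IsBipartite) (ψ : K →g B ⊔ R) (χ : M →g B ⊔ R) {u : V} (hwu : (B ⊔ R).Adj w u)
    (hwψ : ∀ k, (B ⊔ R).Adj w (ψ k)) (hwψ_ind : K.IsIndepSet {k | B.Adj w (ψ k)})
    (hwχ : ∀ l, R.Adj w (χ l)) (huψ : ∀ k, (B ⊔ R).Adj u (ψ k)) (huχ : ∀ l, (B ⊔ R).Adj u (χ l))
    (hψχ : ∀ k l, (B ⊔ R).Adj (ψ k) (χ l)) : B.Adj w u := by
  refine hwu.resolve_right fun hu ↦ ?_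
  obtain ⟨k, l, hkl, hk, hl⟩ := exists_red_edge_of_isIndepSet hK hwψ hwψ_ind
  have hred {u v} (hu : R.Adj w u) (hv : R.Adj w v) (huv : (B ⊔ R).Adj u v) :
      (B ⊔ restrictTo R (R.neighborSet w)).Adj u v := sup_restrictTo_adj huv hu hv
  exact not_triangle_join hB (restrictTo_cliqueFree hR subset_rfl) hM (restrictToHom χ hwχ)
    (fun m ↦ hred hu (hwχ m) (huχ m)) (fun m ↦ hred hk (hwχ m) (hψχ k m))
    (fun m ↦ hred hl (hwχ m) (hψχ l m)) (hred hu hk (huψ k)) (hred hu hl (huψ l))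
    (hred hk hl (ψ.map_adj hkl))

theorem not_adj_of_blue_of_join_red (hB : B.CliqueFree 3) (hR : R.CliqueFree 4)
    (hH : ¬H.IsBipartite) (hM : ¬M.IsBipartite) (φ : H →g R) (χ : M →g B ⊔ R)
    (hwφ : ∀ x, B.Adj w (φ x)) (hwχ : ∀ l, R.Adj w (χ l)) (hφχ : ∀ x l, (B ⊔ R).Adj (φ x) (χ l))
    {a b c : V} (hφa : ∀ x, (B ⊔ R).Adj (φ x) a) (hφb : ∀ x, (B ⊔ R).Adj (φ x) b)
    (hφc : ∀ x, (B ⊔ R).Adj (φ x) c) (haχ : ∀ l, (B ⊔ R).Adj a (χ l))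
    (hbχ : ∀ l, (B ⊔ R).Adj b (χ l)) (hcχ : ∀ l, (B ⊔ R).Adj c (χ l)) (hwa : R.Adj w a)
    (hwb : R.Adj w b) (hwc : B.Adj w c) (hcb : (B ⊔ R).Adj c b) : ¬(B ⊔ R).Adj a b := by
  intro hab
  set s := {u | R.Adj w u ∧ ∀ x, (B ⊔ R).Adj (φ x) u}
  have hL := isTraceSystem_blue (s := s) hB hR φ (fun u hu ↦ hu.1) fun u hu x ↦ (hu.2 x).symm
  have ha_mem : a ∈ s := ⟨hwa, hφa⟩
  have hb_mem : b ∈ s := ⟨hwb, hφb⟩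
  have hχ_mem l : χ l ∈ s := ⟨hwχ l, (hφχ · l)⟩
  have hc_empty : {x | B.Adj c (φ x)} = ∅ := Set.eq_empty_of_forall_notMem fun x ↦
    not_adj_of_cliqueFree_three hB hwc (hwφ x)
  have hc {u} (hcu : (B ⊔ R).Adj c u) (hφu : ∀ x, (B ⊔ R).Adj (φ x) u) :
      B.Adj c u ∨ H.IsVertexCover {x | B.Adj u (φ x)} := hcu.imp_right fun hred ↦ by
    have := isVertexCover_blue_union hR φ (fun x ↦ (hφc x).symm) (fun x ↦ (hφu x).symm) hred
    rwa [hc_empty, Set.empty_union] at this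
  exact hL.not_adj_of_join hH hM (restrictToHom χ hχ_mem)
    (fun l ↦ sup_restrictTo_adj (haχ l) ha_mem (hχ_mem l))
    (fun l ↦ sup_restrictTo_adj (hbχ l) hb_mem (hχ_mem l)) (fun l ↦ hc (hcχ l) (hφχ · l))
    (hc hcb hφb) (sup_restrictTo_adj hab ha_mem hb_mem)

theorem not_forall_adj_of_red_of_red (hB : B.CliqueFree 3) (hR : R.CliqueFree 4)
    (φ : cycleGraph 5 →g R) (ψ χ : cycleGraph 5 →g B ⊔ R) (hwψ : ∀ k, R.Adj w (ψ k))
    (hwχ : ∀ l, R.Adj w (χ l)) (hφψ : ∀ x k, (B ⊔ R).Adj (φ x) (ψ k))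
    (hφχ : ∀ x l, (B ⊔ R).Adj (φ x) (χ l)) : ¬∀ k l, (B ⊔ R).Adj (ψ k) (χ l) := by
  intro hψχ
  have h₅ := not_isBipartite_cycleGraph_five
  have hconn : (cycleGraph 5).Preconnected := cycleGraph_preconnected
  set s := {u | R.Adj w u ∧ ∀ x, (B ⊔ R).Adj (φ x) u}
  have hL := isTraceSystem_blue (s := s) hB hR φ (fun u hu ↦ hu.1) fun u hu x ↦ (hu.2 x).symm
  have hψ_mem k : ψ k ∈ s := ⟨hwψ k, (hφψ · k)⟩
  have hχ_mem l : χ l ∈ s := ⟨hwχ l, (hφχ · l)⟩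
  have hψχ' k l := sup_restrictTo_adj (hψχ k l) (hψ_mem k) (hχ_mem l)
  obtain ⟨hψ, hχ⟩ | ⟨hψ, hχ⟩ := both_blue_or_both_red_of_join hB hL.red_cliqueFree hconn h₅ hconn h₅
    (restrictToHom ψ hψ_mem) (restrictToHom χ hχ_mem) hψχ'
  · exact hL.not_forall_adj_of_blue_cycles ⟨ψ, @hψ⟩ ⟨χ, @hχ⟩ hψχ'
  · exact hL.not_forall_adj_of_red_cycles hconn h₅ ⟨ψ, @hψ⟩ ⟨χ, @hχ⟩ hψχ'

theorem not_forall_adj_of_red (hB : B.CliqueFree 3) (hR : R.CliqueFree 4)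
    (φ ψ χ : cycleGraph 5 →g B ⊔ R) (hwφ : ∀ x, (B ⊔ R).Adj w (φ x))
    (hwψ : ∀ k, (B ⊔ R).Adj w (ψ k)) (hwψ_ind : (cycleGraph 5).IsIndepSet {k | B.Adj w (ψ k)})
    (hwχ : ∀ l, R.Adj w (χ l)) (hφψ : ∀ x k, (B ⊔ R).Adj (φ x) (ψ k))
    (hφχ : ∀ x l, (B ⊔ R).Adj (φ x) (χ l)) : ¬∀ k l, (B ⊔ R).Adj (ψ k) (χ l) := by
  intro hψχ
  have h₅ := not_isBipartite_cycleGraph_five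
  have hwφ_blue x : B.Adj w (φ x) :=
    blue_of_join_red hB hR h₅ h₅ ψ χ (hwφ x) hwψ hwψ_ind hwχ (hφψ x) (hφχ x) hψχ
  let φ_red : cycleGraph 5 →g R :=
    ⟨φ, fun h ↦ red_of_blue_of_blue hB (hwφ_blue _) (hwφ_blue _) (φ.map_adj h)⟩
  by_cases hblue : ∃ i, B.Adj w (ψ i)
  · obtain ⟨i, hi⟩ := hblue
    obtain ⟨j, k, hij, hkj, hj, hk⟩ := exists_adj_adj_notMem_of_isIndepSet hwψ_ind hi
    exact not_adj_of_blue_of_join_red hB hR h₅ h₅ φ_red χ hwφ_blue hwχ hφχ (hφψ · k) (hφψ · j)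
      (hφψ · i) (hψχ k) (hψχ j) (hψχ i) ((hwψ k).resolve_left hk) ((hwψ j).resolve_left hj) hi
      (ψ.map_adj hij) (ψ.map_adj hkj)
  · have hwψ_red k : R.Adj w (ψ k) := (hwψ k).resolve_left fun h ↦ hblue ⟨k, h⟩
    exact not_forall_adj_of_red_of_red hB hR φ_red ψ χ hwψ_red hwχ hφψ hφχ hψχ

theorem isIndepSet_blue_of_join (hB : B.CliqueFree 3) (hR : R.CliqueFree 4)
    (φ ψ χ : cycleGraph 5 →g B ⊔ R) (hwφ : ∀ x, (B ⊔ R).Adj w (φ x))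
    (hwψ : ∀ k, (B ⊔ R).Adj w (ψ k)) (hwχ : ∀ l, (B ⊔ R).Adj w (χ l))
    (hφψ : ∀ x k, (B ⊔ R).Adj (φ x) (ψ k)) (hφχ : ∀ x l, (B ⊔ R).Adj (φ x) (χ l))
    (hψχ : ∀ k l, (B ⊔ R).Adj (ψ k) (χ l)) : (cycleGraph 5).IsIndepSet {x | B.Adj w (φ x)} := by
  refine isIndepSet_iff_forall_not_adj.2 fun x hx y hy hxy ↦ ?_
  have hφxy := φ.map_adj hxy
  have hψ_ind := isIndepSet_blue_of_blue_edge hB hR ψ hφxy hx hy (hφψ x) (hφψ y)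
  have hχ_ind := isIndepSet_blue_of_blue_edge hB hR χ hφxy hx hy (hφχ x) (hφχ y)
  obtain hψ_red | hχ_red := forall_red_or_forall_red_of_blue_edge hB hR hwψ hwχ hψχ hφxy hx hy
    (hφψ x) (hφψ y) (hφχ x) (hφχ y)
  · exact not_forall_adj_of_red hB hR φ χ ψ hwφ hwχ hχ_ind hψ_red hφχ hφψ fun l k ↦ (hψχ k l).symm
  · exact not_forall_adj_of_red hB hR φ ψ χ hwφ hwψ hψ_ind hχ_red hφψ hφχ hψχ

theorem not_forall_adj_of_cone (hB : B.CliqueFree 3) (hR : R.CliqueFree 4)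
    (φ ψ χ : cycleGraph 5 →g B ⊔ R) (hwφ : ∀ x, (B ⊔ R).Adj w (φ x))
    (hwψ : ∀ k, (B ⊔ R).Adj w (ψ k)) (hwχ : ∀ l, (B ⊔ R).Adj w (χ l))
    (hφψ : ∀ x k, (B ⊔ R).Adj (φ x) (ψ k)) (hφχ : ∀ x l, (B ⊔ R).Adj (φ x) (χ l)) :
    ¬∀ k l, (B ⊔ R).Adj (ψ k) (χ l) := by
  intro hψχ
  have h₅ := not_isBipartite_cycleGraph_five
  have hψφ k x := (hφψ x k).symm
  have hχφ l x := (hφχ x l).symm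
  have hχψ l k := (hψχ k l).symm
  obtain h | h | h := exists_not_isIndepSet_blue hB hR h₅ h₅ h₅ φ ψ χ hwφ hwψ hwχ hφψ hφχ hψχ
  · exact h (isIndepSet_blue_of_join hB hR φ ψ χ hwφ hwψ hwχ hφψ hφχ hψχ)
  · exact h (isIndepSet_blue_of_join hB hR ψ φ χ hwψ hwφ hwχ hψφ hψχ hφχ)
  · exact h (isIndepSet_blue_of_join hB hR χ φ ψ hwχ hwφ hwψ hχφ hχψ hφψ)

end Cone

section Coloring

variable {V W : Type*} {G : SimpleGraph V} {H : SimpleGraph W} {E E1 E2 : Set (Sym2 V)} {p q : ℕ}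

theorem hasMonoNClique_iff (hE : E ⊆ G.edgeSet) :
    HasMonoNClique G E p ↔ ¬(fromEdgeSet E).CliqueFree p := by
  simp only [HasMonoNClique, CliqueFree, not_forall, not_not]
  refine exists_congr fun S ↦
    ⟨fun ⟨hS, hSE⟩ ↦ ⟨fun x hx y hy hxy ↦ ?_, hS.card_eq⟩, fun hS ↦ ⟨?_, ?_⟩⟩
  · exact (fromEdgeSet_adj E).2 ⟨hSE x hx y hy hxy, hxy⟩
  · exact hS.mono fun _ _ h ↦ hE ((fromEdgeSet_adj E).1 h).1
  · exact fun x hx y hy hxy ↦ ((fromEdgeSet_adj E).1 (hS.isClique hx hy hxy)).1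

theorem isPQFree_iff (hcol : IsBRColoring G E1 E2) :
    IsPQFree G E1 E2 p q ↔ (fromEdgeSet E1).CliqueFree p ∧ (fromEdgeSet E2).CliqueFree q := by
  rw [IsPQFree, hasMonoNClique_iff (hcol.1 ▸ Set.subset_union_left),
    hasMonoNClique_iff (hcol.1 ▸ Set.subset_union_right), not_not, not_not]

theorem fromEdgeSet_sup_fromEdgeSet (hcol : IsBRColoring G E1 E2) :
    fromEdgeSet E1 ⊔ fromEdgeSet E2 = G := by
  rw [← fromEdgeSet_union, hcol.1, fromEdgeSet_edgeSet]

theorem isBRColoring_edgeSet_sdiff (B R : SimpleGraph V) :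
    IsBRColoring (B ⊔ R) B.edgeSet (R \ B).edgeSet :=
  ⟨by rw [← edgeSet_sup, sup_sdiff_self_right],
    Set.disjoint_iff_inter_eq_empty.1 (disjoint_edgeSet.2 disjoint_sdiff_self_right)⟩

theorem arrows_iff : Arrows G p q ↔
    ∀ B R : SimpleGraph V, B ⊔ R = G → B.CliqueFree p → ¬R.CliqueFree q := by
  constructor
  · rintro h B R rfl hB hR
    have hcol := isBRColoring_edgeSet_sdiff B R
    refine h _ _ hcol ((isPQFree_iff hcol).2 ?_)
    simp only [fromEdgeSet_edgeSet]
    exact ⟨hB, hR.anti sdiff_le⟩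
  · intro h E1 E2 hcol hfree
    obtain ⟨hB, hR⟩ := (isPQFree_iff hcol).1 hfree
    exact h _ _ (fromEdgeSet_sup_fromEdgeSet hcol) hB hR

theorem cliqueFree_induce_of_subset_neighborSet {s : Set V} {v : V} (hs : s ⊆ G.neighborSet v)
    (hG : G.CliqueFree (p + 1)) : (G.induce s).CliqueFree p := by
  rw [cliqueFree_induce_iff]
  exact (CliqueFreeOn.of_succ G (hG.cliqueFreeOn (s := Set.univ)) (Set.mem_univ v)).subset G
    (Set.subset_inter (Set.subset_univ s) hs)

theorem not_containsCopy_induce_colorNbhd_of_arrows (hH : Arrows H p q)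
    (hcol : IsBRColoring G E1 E2) (hfree : IsPQFree G E1 E2 p (q + 1)) (v : V) :
    ¬ContainsCopy (G.induce (colorNbhd G E2 v)) H := by
  rintro ⟨f, hf⟩
  obtain ⟨hB, hR⟩ := (isPQFree_iff hcol).1 hfree
  have hsub : colorNbhd G E2 v ⊆ (fromEdgeSet E2).neighborSet v := fun u hu ↦
    (fromEdgeSet_adj E2).2 ⟨hu.2, hu.1.ne⟩
  have hcopy (A : SimpleGraph V) : H ⊓ (A.induce _).comap f ⊑ A.induce (colorNbhd G E2 v) :=
    ⟨⟨f, fun h ↦ h.2⟩, f.injective⟩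
  refine arrows_iff.1 hH _ _ ?_ ((hB.comap ⟨(Embedding.induce _).toCopy⟩).comap (hcopy _))
    ((cliqueFree_induce_of_subset_neighborSet hsub hR).comap (hcopy _))
  rw [← inf_sup_left, inf_eq_left]
  intro x y hxy
  have hG : (fromEdgeSet E1 ⊔ fromEdgeSet E2).Adj (f x : V) (f y) := by
    rw [fromEdgeSet_sup_fromEdgeSet hcol]
    exact hf x y hxy
  exact hG

theorem arrows_join_cycleGraph_five : Arrows (graphJoin (⊤ : SimpleGraph (Fin 1))
    (graphJoin (cycleGraph 5) (graphJoin (cycleGraph 5) (cycleGraph 5)))) 3 4 := by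
  rw [arrows_iff]
  intro B R hG hB hR
  have hadj {a b} (h : (graphJoin (⊤ : SimpleGraph (Fin 1)) (graphJoin (cycleGraph 5)
      (graphJoin (cycleGraph 5) (cycleGraph 5)))).Adj a b) : (B ⊔ R).Adj a b := hG ▸ h
  exact not_forall_adj_of_cone (w := .inl 0) hB hR ⟨.inr ∘ .inl, @fun _ _ h ↦ hadj h⟩
    ⟨.inr ∘ .inr ∘ .inl, @fun _ _ h ↦ hadj h⟩ ⟨.inr ∘ .inr ∘ .inr, @fun _ _ h ↦ hadj h⟩
    (fun _ ↦ by exact hadj trivial) (fun _ ↦ by exact hadj trivial) (fun _ ↦ by exact hadj trivial)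
    (fun _ _ ↦ by exact hadj trivial) (fun _ _ ↦ by exact hadj trivial)
    fun _ _ ↦ by exact hadj trivial

end Coloring

/-- **Corollary 5.1(d).** In a `(3,5)`-free blue-red coloring of `E(G)`, the
subgraph `G₂(v)` induced by the red neighborhood of `v` does not contain
`K₁ + C₅ + C₅ + C₅` as a subgraph. -/
theorem red_nbhd_no_K1_join_C5_C5_C5 {V : Type*} (G : SimpleGraph V)
    (E1 E2 : Set (Sym2 V)) (hcol : IsBRColoring G E1 E2)
    (hfree : IsPQFree G E1 E2 3 5) (v : V) :
    ¬ ContainsCopy (G.induce (colorNbhd G E2 v))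
        (graphJoin (⊤ : SimpleGraph (Fin 1))
          (graphJoin (cycleGraph 5) (graphJoin (cycleGraph 5) (cycleGraph 5)))) :=
  not_containsCopy_induce_colorNbhd_of_arrows arrows_join_cycleGraph_five hcol hfree v
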